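/- Let ⟨G, Eℓ⟩ be a two-player game graph with live edges and let ⟨F, Q⟩ be a safe generalized Büchi winning condition with Q ⊆ V and F = {F_1, …, F_s}, F_b ⊆ V. Define Z* := νY. ⋂_{b=1}^{s} μ X_b. ( Q ∩ [ (F_b ∩ Cpre(Y)) ∪ Apre(Y, X_b) ] ), i.e. the greatest fixed point of the monotone map Y ↦ ⋂_{b=1}^{s} lfp( X_b ↦ Q ∩ [ (F_b ∩ Cpre(Y)) ∪ Apre(Y, X_b) ] ). Then Z* equals the winning region W of Player 0 in the fair adversarial game over ⟨G, Eℓ⟩ for the winning condition φ = □Q ∧ ⋀_{b=1}^{s} □◇F_b (i.e. the set of plays π with π(i) ∈ Q for all i and, for every b, π(i) ∈ F_b for infinitely many i). Moreover, there exists a finite-memory Player-0 strategy that wins the fair adversarial game for φ from every vertex of Z*. -/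

import Mathlib

/-- Least fixed point of a set transformer (Knaster–Tarski form). -/
def lfpSet {V : Type*} (f : Set V → Set V) : Set V := sInf {X | f X ⊆ X}

/-- Greatest fixed point of a set transformer (Knaster–Tarski form). -/
def gfpSet {V : Type*} (f : Set V → Set V) : Set V := sSup {X | X ⊆ f X}

/-- A two-player game graph with live edges: vertices are partitioned into
Player-0 vertices `V0` and Player-1 vertices `V1`, every vertex has a successor,
and live edges `El` are Player-1 edges. -/
structure LiveGameGraph (V : Type*) where
  V0 : Set V
  V1 : Set V
  E : V → V → Prop
  El : V → V → Prop
  cover : V0 ∪ V1 = Set.univ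
  disj : V0 ∩ V1 = ∅
  succ_nonempty : ∀ v : V, ∃ w, E v w
  live_sub : ∀ v w, El v w → v ∈ V1 ∧ E v w

namespace LiveGameGraph

variable {V : Type*}

/-- Pre∃0(S) -/
def pre0 (Gm : LiveGameGraph V) (S : Set V) : Set V :=
  {v | v ∈ Gm.V0 ∧ ∃ w, Gm.E v w ∧ w ∈ S}

/-- Pre∀1(S) -/
def pre1 (Gm : LiveGameGraph V) (S : Set V) : Set V :=
  {v | v ∈ Gm.V1 ∧ ∀ w, Gm.E v w → w ∈ S}

/-- Cpre(S) -/
def cpre (Gm : LiveGameGraph V) (S : Set V) : Set V := Gm.pre0 S ∪ Gm.pre1 S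

/-- Lpre∃(T) -/
def lpre (Gm : LiveGameGraph V) (T : Set V) : Set V :=
  {v | ∃ w, Gm.El v w ∧ w ∈ T}

/-- Apre(S,T) -/
def apre (Gm : LiveGameGraph V) (S T : Set V) : Set V :=
  Gm.cpre T ∪ (Gm.lpre T ∩ Gm.pre1 S)

end LiveGameGraph

namespace LiveGameGraph

variable {V : Type*}

/-- A play is strongly transition fair if every live edge whose source is visited
infinitely often is itself taken infinitely often. -/
def StronglyFair (Gm : LiveGameGraph V) (π : ℕ → V) : Prop :=
  ∀ v w, Gm.El v w → {i | π i = v}.Infinite → {i | π i = v ∧ π (i + 1) = w}.Infinite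

/-- A Player-0 strategy: given the history (the prefix before the current vertex)
and the current vertex, it chooses an `E`-successor whenever the current vertex
belongs to Player 0. -/
def Strategy0 (Gm : LiveGameGraph V) (ρ : List V → V → V) : Prop :=
  ∀ h v, v ∈ Gm.V0 → Gm.E v (ρ h v)

/-- A Player-1 strategy. -/
def Strategy1 (Gm : LiveGameGraph V) (ρ : List V → V → V) : Prop :=
  ∀ h v, v ∈ Gm.V1 → Gm.E v (ρ h v)

/-- The play compliant with the strategies `ρ0` and `ρ1` starting at `v0`. -/
def Compliant (Gm : LiveGameGraph V) (ρ0 ρ1 : List V → V → V) (v0 : V)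
    (π : ℕ → V) : Prop :=
  π 0 = v0 ∧ ∀ i : ℕ,
    (π i ∈ Gm.V0 → π (i + 1) = ρ0 (List.ofFn fun j : Fin i => π j.1) (π i)) ∧
    (π i ∈ Gm.V1 → π (i + 1) = ρ1 (List.ofFn fun j : Fin i => π j.1) (π i))

/-- Player 0 wins the fair adversarial game for the winning condition `φ`
from `v0` using the strategy `ρ0`. -/
def WinsFrom (Gm : LiveGameGraph V) (φ : (ℕ → V) → Prop)
    (ρ0 : List V → V → V) (v0 : V) : Prop :=
  Gm.Strategy0 ρ0 ∧ ∀ ρ1, Gm.Strategy1 ρ1 → ∀ π, Gm.Compliant ρ0 ρ1 v0 π →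
    (Gm.StronglyFair π → φ π)

/-- The winning region of Player 0 in the fair adversarial game for `φ`. -/
def WinningRegion (Gm : LiveGameGraph V) (φ : (ℕ → V) → Prop) : Set V :=
  {v0 | ∃ ρ0, Gm.WinsFrom φ ρ0 v0}

end LiveGameGraph

/-
Both inclusions compare the fixed point with plays. If the winning region `W` were not a post-fixed
point, some `v ∈ W` would lie outside one of the inner least fixed points `X`. From a vertex of `W`
outside `X`, Player 0 cannot enter `X` in one step and no live edge leads into `X`, so Player 1 can
keep the play outside `X` while taking all live edges fairly. Against a winning strategy this play
stays in `W`, and since `F b ∩ W ⊆ X` it never visits `F b`.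

Conversely, at a fixed point `Z` every inner least fixed point equals `Z` itself. The stage at which
a vertex enters it is a rank, and moving to smaller ranks gives a positional strategy that stays in
`Z` and reaches `F b`: on a fair play, a recurrent vertex of least rank would have a recurrent
successor of smaller rank. Pursuing the goals cyclically, with the current goal as memory, wins.
-/

open Filter OrdinalApprox

universe u

theorem exists_ordinal_rank_lfp {V : Type u} (f : Set V →o Set V) :
    ∃ r : V → Ordinal.{u}, ∀ v ∈ f.lfp, v ∈ f {w ∈ f.lfp | r w < r v} := by
  have approx_subset (a : Ordinal.{u}) : lfpApprox f ⊥ a ⊆ f.lfp :=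
    lfpApprox_le_of_mem_fixedPoints f f.isFixedPt_lfp bot_le a
  let stages (v : V) : Set Ordinal.{u} := {a | v ∈ f (lfpApprox f ⊥ a)}
  refine ⟨fun v => sInf (stages v), fun v hv => ?_⟩
  obtain ⟨a, ha⟩ := lfp_mem_range_lfpApprox f
  have entered : v ∈ f (lfpApprox f ⊥ a) := by rwa [ha, f.map_lfp]
  have entered_first : v ∈ f (lfpApprox f ⊥ (sInf (stages v))) :=
    csInf_mem (⟨a, entered⟩ : (stages v).Nonempty)
  suffices earlier : lfpApprox f ⊥ (sInf (stages v)) ⊆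
      {w ∈ f.lfp | sInf (stages w) < sInf (stages v)} from f.monotone earlier entered_first
  intro w hw
  refine ⟨approx_subset _ hw, ?_⟩
  rw [lfpApprox] at hw
  simp only [bot_sup_eq, Set.iSup_eq_iUnion, Set.mem_iUnion] at hw
  obtain ⟨b, hb, hwb⟩ := hw
  exact (csInf_le' (show b ∈ stages w from hwb)).trans_lt hb

theorem frequently_atTop_add_one_iff {p : ℕ → Prop} :
    (∃ᶠ n in atTop, p (n + 1)) ↔ ∃ᶠ n in atTop, p n := by
  rw [← frequently_map (m := (· + 1)), map_add_atTop_eq_nat]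

theorem exists_seq_frequently_eq (α : Type*) [Countable α] [Nonempty α] :
    ∃ e : ℕ → α, ∀ a, ∃ᶠ n in atTop, e n = a := by
  obtain ⟨g, hg⟩ := exists_surjective_nat α
  refine ⟨fun n => g n.unpair.1, fun a => frequently_atTop.2 fun N => ?_⟩
  obtain ⟨k, rfl⟩ := hg a
  exact ⟨Nat.pair k N, Nat.right_le_pair k N, by simp⟩

theorem exists_perm_forall_iterate_eq (ι : Type*) [Finite ι] :
    ∃ σ : Equiv.Perm ι, ∀ a b, ∃ n, σ^[n] a = b := by
  have := Fintype.ofFinite ι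
  classical
  obtain ⟨σ, hσ, -⟩ := (Finset.univ : Finset ι).exists_cycleOn
  refine ⟨σ, fun a b => ?_⟩
  obtain ⟨n, -, hn⟩ := hσ.exists_pow_eq (Finset.mem_univ a) (Finset.mem_univ b)
  exact ⟨n, by rw [← Equiv.Perm.coe_pow, hn]⟩

theorem frequently_served_of_roundRobin {ι : Type*} {σ : ι → ι}
    (hσ : ∀ a b, ∃ n, σ^[n] a = b) {served : ι → ℕ → Prop} {m : ℕ → ι}
    (stay : ∀ i, ¬ served (m i) i → m (i + 1) = m i)
    (advance : ∀ i, served (m i) i → m (i + 1) = σ (m i))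
    (serve : ∀ i, (∀ j ≥ i, m j = m i) → ∃ j ≥ i, served (m i) j) (b : ι) :
    ∃ᶠ i in atTop, served b i := by
  have next_served (i : ℕ) : ∃ j ≥ i, m j = m i ∧ served (m i) j := by
    by_contra! hnever
    have frozen : ∀ j ≥ i, m j = m i := fun j hj => by
      induction j, hj using Nat.le_induction with
      | base => rfl
      | succ j hj ih => rw [stay j (by rw [ih]; exact hnever j hj ih), ih]
    obtain ⟨j, hj, hs⟩ := serve i frozen
    exact hnever j hj (frozen j hj) hs
  have reaches (i n : ℕ) : ∃ j ≥ i, m j = σ^[n] (m i) := by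
    induction n with
    | zero => exact ⟨i, le_rfl, rfl⟩
    | succ n ih =>
      obtain ⟨j, hij, hj⟩ := ih
      obtain ⟨k, hjk, hk, hs⟩ := next_served j
      refine ⟨k + 1, by omega, ?_⟩
      rw [advance k (by rwa [hk]), hk, hj, Function.iterate_succ_apply']
  refine frequently_atTop.2 fun N => ?_
  obtain ⟨n, hn⟩ := hσ (m N) b
  obtain ⟨i, hNi, hi⟩ := reaches N n
  obtain ⟨j, hij, -, hs⟩ := next_served i
  exact ⟨j, hNi.trans hij, by rwa [hi, hn] at hs⟩

namespace LiveGameGraph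

section History

variable {V : Type*}

/-- The list `π 0, …, π (n - 1)` of vertices that a play visits strictly before time `n`, that is,
the history a strategy is given at time `n`. -/
def history (π : ℕ → V) (n : ℕ) : List V := List.ofFn fun i : Fin n => π i

theorem history_succ (π : ℕ → V) (n : ℕ) : history π (n + 1) = history π n ++ [π n] := by
  rw [history, List.ofFn_succ', List.concat_eq_append]
  rfl

theorem history_succ_eq_cons (π : ℕ → V) (n : ℕ) :
    history π (n + 1) = π 0 :: history (fun i => π (i + 1)) n := by
  simp [history, List.ofFn_succ]

theorem count_history [DecidableEq V] (π : ℕ → V) (v : V) (n : ℕ) :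
    (history π n).count v = Nat.count (fun i => π i = v) n := by
  induction n with
  | zero => simp [history]
  | succ n ih => simp [history_succ, ih, Nat.count_succ, List.count_singleton]

theorem exists_play_of_step (next : List V → V → V) (v : V) :
    ∃ π : ℕ → V, π 0 = v ∧ ∀ n, π (n + 1) = next (history π n) (π n) := by
  let state (n : ℕ) : List V × V := (fun p => (p.1 ++ [p.2], next p.1 p.2))^[n] ([], v)
  have state_succ (n : ℕ) :
      state (n + 1) = ((state n).1 ++ [(state n).2], next (state n).1 (state n).2) :=
    Function.iterate_succ_apply' ..
  have state_fst (n : ℕ) : (state n).1 = history (fun i => (state i).2) n := by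
    induction n with
    | zero => simp [history, state]
    | succ n ih => rw [state_succ, history_succ, ← ih]
  refine ⟨fun n => (state n).2, rfl, fun n => ?_⟩
  simp only [← state_fst, state_succ]

end History

section Graph

variable {V : Type*} (Gm : LiveGameGraph V)

theorem notMem_V0_iff {v : V} : v ∉ Gm.V0 ↔ v ∈ Gm.V1 :=
  Set.ext_iff.1 (IsCompl.of_eq Gm.disj Gm.cover).compl_eq v

theorem mem_cpre_of_mem_V0 {v : V} (hv : v ∈ Gm.V0) {S : Set V} :
    v ∈ Gm.cpre S ↔ ∃ w, Gm.E v w ∧ w ∈ S := by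
  simp [cpre, pre0, pre1, ← notMem_V0_iff, hv]

theorem mem_cpre_of_mem_V1 {v : V} (hv : v ∈ Gm.V1) {S : Set V} :
    v ∈ Gm.cpre S ↔ ∀ w, Gm.E v w → w ∈ S := by
  simp [cpre, pre0, pre1, Gm.notMem_V0_iff.2 hv, hv]

theorem mem_apre_of_mem_V0 {v : V} (hv : v ∈ Gm.V0) {S T : Set V} :
    v ∈ Gm.apre S T ↔ ∃ w, Gm.E v w ∧ w ∈ T := by
  have hv1 : v ∉ Gm.pre1 S := fun h => Gm.notMem_V0_iff.2 h.1 hv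
  simp [apre, hv1, Gm.mem_cpre_of_mem_V0 hv]

theorem cpre_mono : Monotone Gm.cpre := by
  rintro S T hST v (⟨hv, w, hvw, hw⟩ | ⟨hv, hS⟩)
  · exact Or.inl ⟨hv, w, hvw, hST hw⟩
  · exact Or.inr ⟨hv, fun w hvw => hST (hS w hvw)⟩

theorem apre_mono {S S' T T' : Set V} (hS : S ⊆ S') (hT : T ⊆ T') :
    Gm.apre S T ⊆ Gm.apre S' T' := by
  rintro v (hv | ⟨⟨w, hvw, hw⟩, hv, hsucc⟩)
  · exact Or.inl (Gm.cpre_mono hT hv)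
  · exact Or.inr ⟨⟨w, hvw, hT hw⟩, hv, fun w hvw => hS (hsucc w hvw)⟩

theorem apre_subset_cpre {S T : Set V} (hTS : T ⊆ S) : Gm.apre S T ⊆ Gm.cpre S :=
  Set.union_subset (Gm.cpre_mono hTS) fun _ hv => Or.inr hv.2

theorem exists_succ_notMem_of_notMem_cpre {v : V} {S : Set V} (hv : v ∉ Gm.cpre S) :
    ∃ w, Gm.E v w ∧ w ∉ S := by
  by_contra! hsucc
  by_cases h0 : v ∈ Gm.V0
  · obtain ⟨w, hw⟩ := Gm.succ_nonempty v
    exact hv ((Gm.mem_cpre_of_mem_V0 h0).2 ⟨w, hw, hsucc w hw⟩)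
  · exact hv ((Gm.mem_cpre_of_mem_V1 (Gm.notMem_V0_iff.1 h0)).2 hsucc)

end Graph

section Plays

variable {V : Type*} (Gm : LiveGameGraph V)

theorem stronglyFair_iff {π : ℕ → V} :
    Gm.StronglyFair π ↔ ∀ v w, Gm.El v w → (∃ᶠ i in atTop, π i = v) →
      ∃ᶠ i in atTop, π i = v ∧ π (i + 1) = w := by
  simp only [StronglyFair, Nat.frequently_atTop_iff_infinite]

theorem stronglyFair_tail_iff {π : ℕ → V} :
    Gm.StronglyFair (fun i => π (i + 1)) ↔ Gm.StronglyFair π := by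
  rw [stronglyFair_iff, stronglyFair_iff]
  exact forall₃_congr fun v w _ =>
    imp_congr (frequently_atTop_add_one_iff (p := fun i => π i = v))
      (frequently_atTop_add_one_iff (p := fun i => π i = v ∧ π (i + 1) = w))

/-- Plays along edges of the graph in which Player 0 follows `ρ`: the possible outcomes of `ρ`
against an arbitrary opponent, without reference to a Player-1 strategy. -/
def Consistent (ρ : List V → V → V) (π : ℕ → V) : Prop :=
  ∀ i, Gm.E (π i) (π (i + 1)) ∧ (π i ∈ Gm.V0 → π (i + 1) = ρ (history π i) (π i))

theorem consistent_iff_tail {ρ : List V → V → V} {π : ℕ → V} :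
    Gm.Consistent ρ π ↔ (Gm.E (π 0) (π 1) ∧ (π 0 ∈ Gm.V0 → π 1 = ρ [] (π 0))) ∧
      Gm.Consistent (fun h => ρ (π 0 :: h)) (fun i => π (i + 1)) := by
  simp only [Consistent, ← history_succ_eq_cons]
  exact Nat.and_forall_add_one.symm

theorem winsFrom_iff {φ : (ℕ → V) → Prop} {ρ : List V → V → V} {v : V} :
    Gm.WinsFrom φ ρ v ↔ Gm.Strategy0 ρ ∧
      ∀ π, π 0 = v → Gm.Consistent ρ π → Gm.StronglyFair π → φ π := by
  classical
  refine and_congr_right fun hρ => ⟨fun hwins π hπ hcons => ?_, fun hwins ρ' hρ' π hπ => ?_⟩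
  · choose succ hsucc using Gm.succ_nonempty
    let follow (h : List V) (u : V) : V :=
      if Gm.E u (π (h.length + 1)) then π (h.length + 1) else succ u
    refine hwins follow (fun h u _ => ?_) π ⟨hπ, fun i => ⟨(hcons i).2, fun _ => ?_⟩⟩
    · by_cases hu : Gm.E u (π (h.length + 1)) <;> simp [follow, hu, hsucc]
    · simp [follow, (hcons i).1]
  · refine hwins π hπ.1 fun i => ⟨?_, (hπ.2 i).1⟩
    by_cases h0 : π i ∈ Gm.V0
    · rw [(hπ.2 i).1 h0]
      exact hρ _ _ h0
    · have h1 : π i ∈ Gm.V1 := Gm.notMem_V0_iff.1 h0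
      rw [(hπ.2 i).2 h1]
      exact hρ' _ _ h1

end Plays

section WinningRegion

variable {V : Type*} {Gm : LiveGameGraph V} {φ : (ℕ → V) → Prop} {ρ : List V → V → V}

theorem WinsFrom.residual (hφ : ∀ π, φ π → φ fun i => π (i + 1)) {v w : V}
    (hwins : Gm.WinsFrom φ ρ v) (hvw : Gm.E v w) (hw : v ∈ Gm.V0 → w = ρ [] v) :
    Gm.WinsFrom φ (fun h => ρ (v :: h)) w := by
  rw [winsFrom_iff] at hwins ⊢
  refine ⟨fun h u hu => hwins.1 _ u hu, fun π hπ hcons hfair => ?_⟩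
  subst hπ
  let extended : ℕ → V := fun i => Nat.casesOn i v π
  exact hφ extended <| hwins.2 extended rfl (Gm.consistent_iff_tail.2 ⟨⟨hvw, hw⟩, hcons⟩)
    (Gm.stronglyFair_tail_iff.1 hfair)

theorem WinsFrom.mem_winningRegion_of_consistent (hφ : ∀ π, φ π → φ fun i => π (i + 1))
    {π : ℕ → V} (hwins : Gm.WinsFrom φ ρ (π 0)) (hcons : Gm.Consistent ρ π) (i : ℕ) :
    π i ∈ Gm.WinningRegion φ := by
  induction i generalizing ρ π with
  | zero => exact ⟨ρ, hwins⟩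
  | succ i ih =>
    obtain ⟨⟨hedge, hmove⟩, htail⟩ := Gm.consistent_iff_tail.1 hcons
    exact ih (hwins.residual hφ hedge hmove) htail

theorem winningRegion_subset_cpre (hφ : ∀ π, φ π → φ fun i => π (i + 1)) :
    Gm.WinningRegion φ ⊆ Gm.cpre (Gm.WinningRegion φ) := by
  rintro v ⟨ρ, hwins⟩
  by_cases h0 : v ∈ Gm.V0
  · have hedge := hwins.1 [] v h0
    exact (Gm.mem_cpre_of_mem_V0 h0).2 ⟨ρ [] v, hedge, _, hwins.residual hφ hedge fun _ => rfl⟩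
  · exact (Gm.mem_cpre_of_mem_V1 (Gm.notMem_V0_iff.1 h0)).2 fun w hedge =>
      ⟨_, hwins.residual hφ hedge fun h => absurd h h0⟩

end WinningRegion

section FairPlays

variable {V : Type*} [Countable V] {Gm : LiveGameGraph V} {ρ : List V → V → V}

/- Player 1 leaves `v` for the `n`-th time along the `n`-th term of a sequence that lists every
allowed successor of `v` infinitely often. -/
theorem exists_fair_play_of_restriction (hρ : Gm.Strategy0 ρ) (A : V → Set V)
    (hne : ∀ v, (A v).Nonempty) (hE : ∀ v, ∀ w ∈ A v, Gm.E v w)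
    (hlive : ∀ v w, Gm.El v w → w ∈ A v) (v : V) :
    ∃ π : ℕ → V, π 0 = v ∧ Gm.Consistent ρ π ∧ Gm.StronglyFair π ∧
      ∀ i, π i ∈ Gm.V1 → π (i + 1) ∈ A (π i) := by
  classical
  have (u : V) : Nonempty (A u) := (hne u).to_subtype
  choose e he using fun u => exists_seq_frequently_eq (A u)
  obtain ⟨π, hπ, hstep⟩ :=
    exists_play_of_step (fun h u => if u ∈ Gm.V0 then ρ h u else e u (h.count u)) v
  have move0 (i : ℕ) (hi : π i ∈ Gm.V0) : π (i + 1) = ρ (history π i) (π i) := by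
    rw [hstep, if_pos hi]
  have move1 (i : ℕ) (hi : π i ∈ Gm.V1) :
      π (i + 1) = e (π i) (Nat.count (fun j => π j = π i) i) := by
    rw [hstep, if_neg (Gm.notMem_V0_iff.2 hi), count_history]
  have allowed (i : ℕ) (hi : π i ∈ Gm.V1) : π (i + 1) ∈ A (π i) := by
    rw [move1 i hi]
    exact Subtype.coe_prop _
  refine ⟨π, hπ, fun i => ⟨?_, move0 i⟩, ?_, allowed⟩
  · by_cases h0 : π i ∈ Gm.V0
    · exact move0 i h0 ▸ hρ _ _ h0
    · exact hE _ _ (allowed i (Gm.notMem_V0_iff.1 h0))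
  · refine Gm.stronglyFair_iff.2 fun u w huw hu => ?_
    have visits := Nat.frequently_atTop_iff_infinite.1 hu
    refine (Nat.nth_strictMono visits).tendsto_atTop.frequently
      ((he u ⟨w, hlive u w huw⟩).mono fun n hn => ?_)
    have hvisit : π (Nat.nth (fun i => π i = u) n) = u := Nat.nth_mem_of_infinite visits n
    refine ⟨hvisit, ?_⟩
    have hvisit1 : π (Nat.nth (fun i => π i = u) n) ∈ Gm.V1 := by
      rw [hvisit]
      exact (Gm.live_sub u w huw).1
    rw [move1 _ hvisit1, hvisit, Nat.count_nth_of_infinite visits, hn]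

theorem exists_fair_play_avoiding (hρ : Gm.Strategy0 ρ) {W X : Set V} (hW : W ⊆ Gm.cpre W)
    (hX : W ∩ Gm.apre W X ⊆ X) {v : V} (hv : v ∉ X) :
    ∃ π : ℕ → V, π 0 = v ∧ Gm.Consistent ρ π ∧ Gm.StronglyFair π ∧
      ((∀ i, π i ∈ W) → ∀ i, π i ∉ X) := by
  have notMem_apre {u : V} (huW : u ∈ W) (huX : u ∉ X) : u ∉ Gm.apre W X :=
    fun hu => huX (hX ⟨huW, hu⟩)
  let A (u : V) : Set V := {w | Gm.E u w ∧ (u ∈ W → u ∉ X → w ∉ X)}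
  have hne (u : V) : (A u).Nonempty := by
    by_cases hu : u ∈ W ∧ u ∉ X
    · obtain ⟨w, huw, hw⟩ := Gm.exists_succ_notMem_of_notMem_cpre
        fun h => notMem_apre hu.1 hu.2 (Or.inl h)
      exact ⟨w, huw, fun _ _ => hw⟩
    · obtain ⟨w, huw⟩ := Gm.succ_nonempty u
      exact ⟨w, huw, fun huW huX => absurd ⟨huW, huX⟩ hu⟩
  have hlive (u w : V) (huw : Gm.El u w) : w ∈ A u := by
    obtain ⟨hu1, hedge⟩ := Gm.live_sub u w huw
    refine ⟨hedge, fun huW huX hwX => notMem_apre huW huX (Or.inr ⟨⟨w, huw, hwX⟩, hu1, ?_⟩)⟩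
    exact (Gm.mem_cpre_of_mem_V1 hu1).1 (hW huW)
  obtain ⟨π, hπ, hcons, hfair, hA⟩ :=
    exists_fair_play_of_restriction hρ A hne (fun _ _ h => h.1) hlive v
  refine ⟨π, hπ, hcons, hfair, fun hπW i => ?_⟩
  induction i with
  | zero => rwa [hπ]
  | succ i ih =>
    by_cases h0 : π i ∈ Gm.V0
    · exact fun hmem => notMem_apre (hπW i) ih
        ((Gm.mem_apre_of_mem_V0 h0).2 ⟨_, (hcons i).1, hmem⟩)
    · exact (hA i (Gm.notMem_V0_iff.1 h0)).2 (hπW i) ih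

theorem winningRegion_subset_of_forall_apply_zero_mem {φ : (ℕ → V) → Prop} {Q : Set V}
    (hφ : ∀ π, φ π → π 0 ∈ Q) : Gm.WinningRegion φ ⊆ Q := by
  rintro v ⟨ρ, hwins⟩
  rw [winsFrom_iff] at hwins
  obtain ⟨π, rfl, hcons, hfair, -⟩ := exists_fair_play_of_restriction hwins.1
    (fun u => {w | Gm.E u w}) Gm.succ_nonempty (fun _ _ h => h)
    (fun u w h => (Gm.live_sub u w h).2) v
  exact hφ π (hwins.2 π rfl hcons hfair)

end FairPlays

section SafeGenBuchi

variable {V ι : Type*} (Gm : LiveGameGraph V) (Q : Set V)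

/-- The safe generalized Büchi condition `□Q ∧ ⋀ b, □◇F b`, for goal sets indexed by an
arbitrary type. -/
def SafeGenBuchi (F : ι → Set V) (π : ℕ → V) : Prop :=
  (∀ i, π i ∈ Q) ∧ ∀ b, ∃ᶠ i in atTop, π i ∈ F b

/-- The body `Q ∩ [(T ∩ Cpre(Y)) ∪ Apre(Y, X)]` of the nested fixpoint for a single goal set `T`,
as a monotone map in `Y` and then `X`, so that its least fixed point in `X` is monotone in `Y`. -/
def reachMap (T : Set V) : Set V →o Set V →o Set V where
  toFun Y :=
    { toFun X := Q ∩ ((T ∩ Gm.cpre Y) ∪ Gm.apre Y X)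
      monotone' _ _ hX := Set.inter_subset_inter_right _ <|
        Set.union_subset_union_right _ (Gm.apre_mono subset_rfl hX) }
  monotone' _ _ hY _ := Set.inter_subset_inter_right _ <|
    Set.union_subset_union (Set.inter_subset_inter_right _ (Gm.cpre_mono hY))
      (Gm.apre_mono hY subset_rfl)

/-- The map `Y ↦ ⋂ b, μX. Q ∩ [(F b ∩ Cpre(Y)) ∪ Apre(Y, X)]`, whose greatest fixed point is the
winning region for `SafeGenBuchi Q F`. -/
def safeGenBuchiMap (F : ι → Set V) : Set V →o Set V where
  toFun Y := ⋂ b, (Gm.reachMap Q (F b) Y).lfp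
  monotone' _ _ hY := Set.iInter_mono fun b =>
    OrderHom.lfp.monotone ((Gm.reachMap Q (F b)).monotone hY)

variable {Gm Q} {F : ι → Set V}

theorem SafeGenBuchi.tail {π : ℕ → V} (hπ : SafeGenBuchi Q F π) :
    SafeGenBuchi Q F fun i => π (i + 1) :=
  ⟨fun i => hπ.1 (i + 1), fun b =>
    frequently_atTop_add_one_iff (p := fun i => π i ∈ F b).2 (hπ.2 b)⟩

theorem winningRegion_subset_safeGenBuchiMap [Countable V] :
    Gm.WinningRegion (SafeGenBuchi Q F) ⊆
      Gm.safeGenBuchiMap Q F (Gm.WinningRegion (SafeGenBuchi Q F)) := by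
  set W := Gm.WinningRegion (SafeGenBuchi Q F)
  have hWQ : W ⊆ Q := winningRegion_subset_of_forall_apply_zero_mem fun _ hπ => hπ.1 0
  have hWcpre : W ⊆ Gm.cpre W := winningRegion_subset_cpre fun _ => SafeGenBuchi.tail
  intro v hv
  refine Set.mem_iInter.2 fun b => ?_
  set X := (Gm.reachMap Q (F b) W).lfp
  have hX : Q ∩ ((F b ∩ Gm.cpre W) ∪ Gm.apre W X) = X := (Gm.reachMap Q (F b) W).map_lfp
  by_contra hvX
  obtain ⟨ρ, hwins⟩ := hv
  obtain ⟨π, rfl, hcons, hfair, havoid⟩ := exists_fair_play_avoiding hwins.1 hWcpre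
    (fun u hu => hX ▸ ⟨hWQ hu.1, Or.inr hu.2⟩) hvX
  have hπW : ∀ i, π i ∈ W :=
    hwins.mem_winningRegion_of_consistent (fun _ => SafeGenBuchi.tail) hcons
  obtain ⟨i, hi⟩ := ((Gm.winsFrom_iff.1 hwins).2 π rfl hcons hfair).2 b |>.exists
  refine havoid hπW i ?_
  rw [← hX]
  exact ⟨hWQ (hπW i), Or.inl ⟨hi, hWcpre (hπW i)⟩⟩

theorem lfp_reachMap_subset_lfp_reachMap {T T' Z : Set V} (hZ : Z ⊆ (Gm.reachMap Q T' Z).lfp) :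
    (Gm.reachMap Q T Z).lfp ⊆ (Gm.reachMap Q T' Z).lfp := by
  refine (Gm.reachMap Q T Z).lfp_le ?_
  rintro v ⟨hQ, hv⟩
  refine (Gm.reachMap Q T' Z).map_lfp.subset ⟨hQ, Or.inr ?_⟩
  exact hv.elim (fun h => Or.inl (Gm.cpre_mono hZ h.2)) id

theorem lfp_reachMap_eq_of_isFixedPt {Z : Set V}
    (hZ : Function.IsFixedPt (Gm.safeGenBuchiMap Q F) Z) (b : ι) :
    (Gm.reachMap Q (F b) Z).lfp = Z := by
  have hsub (d : ι) : Z ⊆ (Gm.reachMap Q (F d) Z).lfp :=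
    hZ.symm.subset.trans (Set.iInter_subset _ d)
  refine Set.Subset.antisymm ?_ (hsub b)
  exact (Set.subset_iInter fun d => lfp_reachMap_subset_lfp_reachMap (hsub d)).trans hZ.subset

end SafeGenBuchi

section Attractor

/-- Positional Player-0 strategies that never leave `Z` on their own account and that, followed
from some time on along a fair play inside `Z`, eventually reach `T`. -/
structure IsFairAttractor {V : Type*} (Gm : LiveGameGraph V) (Z T : Set V) (c : V → V) : Prop where
  edge : ∀ v ∈ Gm.V0, Gm.E v (c v)
  stays : ∀ v ∈ Gm.V0, v ∈ Z → c v ∈ Z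
  reaches : ∀ π : ℕ → V, Gm.StronglyFair π → (∀ i, Gm.E (π i) (π (i + 1))) → (∀ i, π i ∈ Z) →
    ∀ N, (∀ i ≥ N, π i ∈ Gm.V0 → π (i + 1) = c (π i)) → ∃ i ≥ N, π i ∈ T

variable {V : Type*} {Gm : LiveGameGraph V} {Q Z T : Set V}

theorem subset_of_lfp_reachMap_eq (hZ : (Gm.reachMap Q T Z).lfp = Z) : Z ⊆ Q ∩ Gm.cpre Z := by
  have hmap : Gm.reachMap Q T Z Z = Z := by simpa only [hZ] using (Gm.reachMap Q T Z).map_lfp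
  intro v hv
  obtain ⟨hQ, ⟨-, hcpre⟩ | hapre⟩ := hmap.symm.subset hv
  · exact ⟨hQ, hcpre⟩
  · exact ⟨hQ, Gm.apre_subset_cpre subset_rfl hapre⟩

theorem exists_mem_of_rank_decreasing [Finite V] {α : Type*} [Preorder α] [WellFoundedLT α]
    {r : V → α} {c : V → V} (hr : ∀ v ∈ Z, v ∉ T → v ∈ Gm.apre Z {w | r w < r v})
    (hc : ∀ v ∈ Gm.V0, v ∈ Z → v ∉ T → r (c v) < r v) {π : ℕ → V} (hfair : Gm.StronglyFair π)
    (hE : ∀ i, Gm.E (π i) (π (i + 1))) (hZ : ∀ i, π i ∈ Z) {N : ℕ}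
    (hmove : ∀ i ≥ N, π i ∈ Gm.V0 → π (i + 1) = c (π i)) : ∃ i ≥ N, π i ∈ T := by
  by_contra! hT
  let recurrent : Set V := {v | ∃ᶠ i in atTop, π i = v}
  have hne : recurrent.Nonempty :=
    frequently_exists.1 (Eventually.of_forall fun i => ⟨π i, rfl⟩).frequently
  obtain ⟨v, hv, hmin⟩ := (InvImage.wf r wellFounded_lt).has_min recurrent hne
  have hlate : ∃ᶠ i in atTop, π i = v ∧ N ≤ i := hv.and_eventually (eventually_ge_atTop N)
  obtain ⟨w, hw⟩ : ∃ w, ∃ᶠ i in atTop, (π i = v ∧ N ≤ i) ∧ π (i + 1) = w :=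
    frequently_exists.1 (hlate.mono fun i hi => ⟨_, hi, rfl⟩)
  have recurrent_succ {u : V} (hu : ∃ᶠ i in atTop, π i = v ∧ π (i + 1) = u) : u ∈ recurrent :=
    frequently_atTop_add_one_iff (p := fun i => π i = u).1 (hu.mono fun _ h => h.2)
  have hwrec : w ∈ recurrent := recurrent_succ (hw.mono fun _ h => ⟨h.1.1, h.2⟩)
  obtain ⟨i, ⟨rfl, hi⟩, rfl⟩ := hw.exists
  by_cases h0 : π i ∈ Gm.V0
  · refine hmin _ hwrec ?_
    rw [hmove i hi h0]
    exact hc _ h0 (hZ i) (hT i hi)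
  · have h1 : π i ∈ Gm.V1 := Gm.notMem_V0_iff.1 h0
    rcases hr _ (hZ i) (hT i hi) with hcpre | ⟨⟨u, hlive, hu⟩, -⟩
    · exact hmin _ hwrec ((Gm.mem_cpre_of_mem_V1 h1).1 hcpre _ (hE i))
    · exact hmin u (recurrent_succ (Gm.stronglyFair_iff.1 hfair _ u hlive hv)) hu

theorem exists_isFairAttractor [Finite V] (hZ : (Gm.reachMap Q T Z).lfp = Z) :
    ∃ c, Gm.IsFairAttractor Z T c := by
  obtain ⟨r, hr⟩ := exists_ordinal_rank_lfp (Gm.reachMap Q T Z)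
  rw [hZ] at hr
  have hrank (v : V) (hv : v ∈ Z) (hvT : v ∉ T) : v ∈ Gm.apre Z {w ∈ Z | r w < r v} :=
    (hr v hv).2.resolve_left fun h => hvT h.1
  have hmoves (v : V) : ∃ w, v ∈ Gm.V0 →
      Gm.E v w ∧ (v ∈ Z → w ∈ Z ∧ (v ∉ T → r w < r v)) := by
    by_cases h0 : v ∈ Gm.V0; swap
    · exact ⟨v, fun h => absurd h h0⟩
    by_cases hvZ : v ∈ Z; swap
    · obtain ⟨w, hvw⟩ := Gm.succ_nonempty v
      exact ⟨w, fun _ => ⟨hvw, fun h => absurd h hvZ⟩⟩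
    by_cases hvT : v ∈ T
    · obtain ⟨w, hvw, hw⟩ := (Gm.mem_cpre_of_mem_V0 h0).1 (subset_of_lfp_reachMap_eq hZ hvZ).2
      exact ⟨w, fun _ => ⟨hvw, fun _ => ⟨hw, fun h => absurd hvT h⟩⟩⟩
    · obtain ⟨w, hvw, hw, hlt⟩ := (Gm.mem_apre_of_mem_V0 h0).1 (hrank v hvZ hvT)
      exact ⟨w, fun _ => ⟨hvw, fun _ => ⟨hw, fun _ => hlt⟩⟩⟩
  choose c hc using hmoves
  exact ⟨c, fun v h0 => (hc v h0).1, fun v h0 hv => ((hc v h0).2 hv).1,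
    fun π hfair hE hπZ N => exists_mem_of_rank_decreasing
      (fun v hv hvT => Gm.apre_mono subset_rfl (fun _ h => h.2) (hrank v hv hvT))
      (fun v h0 hv => ((hc v h0).2 hv).2) hfair hE hπZ⟩

end Attractor

section RoundRobin

variable {V ι : Type*} {Gm : LiveGameGraph V} {Q Z : Set V} {F : ι → Set V}

open Classical in
/-- Memory update of the round-robin strategy: the memory is the index of the goal set currently
pursued, and it moves on along `σ` when that goal set is visited. -/
noncomputable def roundRobinUpdate (σ : ι → ι) (F : ι → Set V) (b : ι) (v : V) : ι :=
  if v ∈ F b then σ b else b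

theorem Consistent.forall_mem {ρ : List V → V → V} {π : ℕ → V} (hcons : Gm.Consistent ρ π)
    (hZ : Z ⊆ Gm.cpre Z) (hρ : ∀ h, ∀ v ∈ Gm.V0, v ∈ Z → ρ h v ∈ Z) (h0 : π 0 ∈ Z) (i : ℕ) :
    π i ∈ Z := by
  induction i with
  | zero => exact h0
  | succ i ih =>
    by_cases hi : π i ∈ Gm.V0
    · rw [(hcons i).2 hi]
      exact hρ _ _ hi ih
    · exact (Gm.mem_cpre_of_mem_V1 (Gm.notMem_V0_iff.1 hi)).1 (hZ ih) _ (hcons i).1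

theorem winsFrom_roundRobin (hZ : Z ⊆ Q ∩ Gm.cpre Z) {c : ι → V → V}
    (hc : ∀ b, Gm.IsFairAttractor Z (F b) (c b)) {σ : ι → ι} (hσ : ∀ a b, ∃ n, σ^[n] a = b)
    (b₀ : ι) {v : V} (hv : v ∈ Z) :
    Gm.WinsFrom (SafeGenBuchi Q F) (fun h => c (h.foldl (roundRobinUpdate σ F) b₀)) v := by
  refine Gm.winsFrom_iff.2 ⟨fun h => (hc _).edge, fun π hπ hcons hfair => ?_⟩
  subst hπ
  have hπZ : ∀ i, π i ∈ Z :=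
    hcons.forall_mem (hZ.trans Set.inter_subset_right) (fun h => (hc _).stays) hv
  let goal (i : ℕ) : ι := (history π i).foldl (roundRobinUpdate σ F) b₀
  have goal_succ (i : ℕ) : goal (i + 1) = roundRobinUpdate σ F (goal i) (π i) := by
    simp [goal, history_succ]
  refine ⟨fun i => (hZ (hπZ i)).1, frequently_served_of_roundRobin hσ
    (served := fun b i => π i ∈ F b) (m := goal) (fun i hi => ?_) (fun i hi => ?_)
    fun i hi => ?_⟩
  · rw [goal_succ, roundRobinUpdate, if_neg hi]
  · rw [goal_succ, roundRobinUpdate, if_pos hi]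
  · refine (hc (goal i)).reaches π hfair (fun j => (hcons j).1) hπZ i fun j hj h0 => ?_
    rw [← hi j hj]
    exact (hcons j).2 h0

theorem exists_memory_strategy_of_isFixedPt [Finite V] [Finite ι] [Nonempty ι]
    (hZ : Function.IsFixedPt (Gm.safeGenBuchiMap Q F) Z) :
    ∃ (b₀ : ι) (upd : ι → V → ι) (c : ι → V → V), (∀ b, ∀ v ∈ Gm.V0, Gm.E v (c b v)) ∧
      ∀ v ∈ Z, Gm.WinsFrom (SafeGenBuchi Q F) (fun h => c (h.foldl upd b₀)) v := by
  have hlfp := lfp_reachMap_eq_of_isFixedPt hZ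
  choose c hc using fun b => exists_isFairAttractor (hlfp b)
  obtain ⟨σ, hσ⟩ := exists_perm_forall_iterate_eq ι
  obtain ⟨b₀⟩ := ‹Nonempty ι›
  exact ⟨b₀, roundRobinUpdate σ F, c, fun b => (hc b).edge, fun v hv =>
    winsFrom_roundRobin (subset_of_lfp_reachMap_eq (hlfp b₀)) hc hσ b₀ hv⟩

theorem gfp_safeGenBuchiMap_eq_winningRegion [Finite V] [Finite ι] [Nonempty ι] :
    (Gm.safeGenBuchiMap Q F).gfp = Gm.WinningRegion (SafeGenBuchi Q F) := by
  refine Set.Subset.antisymm (fun v hv => ?_)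
    ((Gm.safeGenBuchiMap Q F).le_gfp winningRegion_subset_safeGenBuchiMap)
  obtain ⟨b₀, upd, c, -, hwins⟩ :=
    exists_memory_strategy_of_isFixedPt (Gm.safeGenBuchiMap Q F).isFixedPt_gfp
  exact ⟨_, hwins v hv⟩

end RoundRobin

end LiveGameGraph

/-- the fixpoint νY. ⋂_{b=1}^s μX_b. (Q ∩ [(F_b ∩ Cpre(Y)) ∪ Apre(Y,X_b)])
equals the winning region of Player 0 in the fair adversarial game for the
safe generalized Büchi condition □Q ∧ ⋀_b □◇F_b, and a finite-memory winning
Player-0 strategy exists on it. -/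
theorem fair_adversarial_safe_gen_buchi {V : Type*} [Fintype V]
    (Gm : LiveGameGraph V) (Q : Set V) (s : ℕ) (hs : 1 ≤ s) (F : ℕ → Set V)
    (Zstar : Set V)
    (hZ : Zstar = gfpSet fun Y => ⋂ b ∈ Finset.Icc 1 s, lfpSet fun X =>
      Q ∩ ((F b ∩ Gm.cpre Y) ∪ Gm.apre Y X)) :
    Zstar = Gm.WinningRegion
        (fun π => (∀ i, π i ∈ Q) ∧ ∀ b ∈ Finset.Icc 1 s, ∀ N, ∃ i ≥ N, π i ∈ F b) ∧
    ∃ (M : Type) (_ : Fintype M) (m0 : M) (upd : M → V → M) (c : M → V → V),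
      (∀ m v, v ∈ Gm.V0 → Gm.E v (c m v)) ∧
      ∀ v0 ∈ Zstar,
        Gm.WinsFrom
          (fun π => (∀ i, π i ∈ Q) ∧ ∀ b ∈ Finset.Icc 1 s, ∀ N, ∃ i ≥ N, π i ∈ F b)
          (fun h v => c (List.foldl upd m0 h) v) v0 := by
  have : Nonempty (Finset.Icc 1 s) := ⟨⟨1, Finset.mem_Icc.2 ⟨le_rfl, hs⟩⟩⟩
  let G (b : Finset.Icc 1 s) : Set V := F b
  have hgfp : Zstar = (Gm.safeGenBuchiMap Q G).gfp :=
    hZ.trans <| congrArg gfpSet <| funext fun Y =>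
      (Set.iInter_subtype (· ∈ Finset.Icc 1 s) fun b => (Gm.reachMap Q (G b) Y).lfp).symm
  have hwin : (fun π : ℕ → V => (∀ i, π i ∈ Q) ∧
      ∀ b ∈ Finset.Icc 1 s, ∀ N, ∃ i ≥ N, π i ∈ F b) = LiveGameGraph.SafeGenBuchi Q G := by
    funext π
    simp only [LiveGameGraph.SafeGenBuchi, frequently_atTop, Subtype.forall, G]
  rw [hwin, hgfp]
  obtain ⟨b₀, upd, c, hc, hwins⟩ :=
    LiveGameGraph.exists_memory_strategy_of_isFixedPt (Gm.safeGenBuchiMap Q G).isFixedPt_gfp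
  exact ⟨LiveGameGraph.gfp_safeGenBuchiMap_eq_winningRegion,
    Finset.Icc 1 s, inferInstance, b₀, upd, c, hc, hwins⟩
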